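/- Let m ≥ 1 and let C : ℤ^m → [0,∞) satisfy: (i) C is even and C(x) = 0 iff x = 0; (ii) C(x) ≤ C(y) whenever x ⪯ y; (iii') there exists a monotone norm ∥·∥⋆ on ℝ^m such that C(x)/∥x∥⋆ ≤ C(x')/∥x'∥⋆ for all nonzero x', x ∈ ℤ^m with x' ⪯ x. Fix positive integers N_1, …, N_m with N := N_1 + … + N_m. Then for every pair of sign vectors s, s' ∈ {−1,1}^m one has A_{s'} ∩ H_s = conv({0} ∪ {q_D^{(s')} : D ∈ Ā ∩ H_s ∩ H_{s'}, D ≠ 0}); moreover for D ∈ Ā ∩ H_s ∩ H_{s'} \ {0} one has q_D^{(s)} = q_D^{(s')}, and in particular A_{s'} ∩ H_s = A_s ∩ H_{s'}. -/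

import Mathlib

/-- `f` is a norm on the real vector space `E`. -/
def IsNorm {E : Type*} [AddCommGroup E] [Module ℝ E] (f : E → ℝ) : Prop :=
  (∀ x, 0 ≤ f x) ∧ (∀ x, f x = 0 ↔ x = 0) ∧
    (∀ x y, f (x + y) ≤ f x + f y) ∧ ∀ (c : ℝ) (x : E), f (c • x) = |c| * f x

/-- The partial order `x ⪯ y` on real vectors. -/
def PreOrd {ι : Type*} (x y : ι → ℝ) : Prop :=
  ∀ j, |x j| ≤ |y j| ∧ 0 ≤ x j * y j

/-- The partial order `x ⪯ y` on integer vectors. -/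
def PreOrdInt {ι : Type*} (x y : ι → ℤ) : Prop :=
  ∀ j, |x j| ≤ |y j| ∧ 0 ≤ x j * y j

/-- `s ∈ {-1, 1}^m` is a sign vector. -/
def SignVec {m : ℕ} (s : Fin m → ℤ) : Prop := ∀ i, s i = 1 ∨ s i = -1

/-- `D ∈ Ā`, i.e. all coordinates of `D ∈ ℤ^N` lie in `{-1, 0, 1}`. -/
def inAbar {m : ℕ} {N : Fin m → ℕ} (D : (Σ i : Fin m, Fin (N i)) → ℤ) : Prop :=
  ∀ j, D j = -1 ∨ D j = 0 ∨ D j = 1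

/-- `β(D̄) ∈ ℤ^m`: the vector of block sums of the coordinatewise absolute value of
`D`. -/
def blockAbsSum {m : ℕ} (N : Fin m → ℕ) (D : (Σ i : Fin m, Fin (N i)) → ℤ) :
    Fin m → ℤ :=
  fun i => ∑ k : Fin (N i), |D ⟨i, k⟩|

/-- The cost `C_s(x) := C(s_1 |x_1|, …, s_m |x_m|)`. -/
def Csgn {m : ℕ} (C : (Fin m → ℤ) → ℝ) (s : Fin m → ℤ) : (Fin m → ℤ) → ℝ :=
  fun x => C fun i => s i * |x i|

/-- The vector `τ_s ∈ ℝ^N`, equal to `s i` on the block `B_i`. -/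
def tauS {m : ℕ} (N : Fin m → ℕ) (s : Fin m → ℤ) : (Σ i : Fin m, Fin (N i)) → ℝ :=
  fun j => (s j.1 : ℝ)

/-- The orthant `H_s := {p ∈ ℝ^N : (τ_s)_j p_j ≥ 0 for all j}`. -/
def HsSet {m : ℕ} (N : Fin m → ℕ) (s : Fin m → ℤ) :
    Set ((Σ i : Fin m, Fin (N i)) → ℝ) :=
  {p | ∀ j, 0 ≤ tauS N s j * p j}

/-- `q_D^{(s)} := D / C_s(β(D̄))`. -/
noncomputable def qDs {m : ℕ} (N : Fin m → ℕ) (C : (Fin m → ℤ) → ℝ)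
    (s : Fin m → ℤ) (D : (Σ i : Fin m, Fin (N i)) → ℤ) :
    (Σ i : Fin m, Fin (N i)) → ℝ :=
  fun j => (D j : ℝ) / Csgn C s (blockAbsSum N D)

/-- `B_s := conv {q_D^{(s)} : D ∈ Ā \ {0}}`. -/
noncomputable def BsSet {m : ℕ} (N : Fin m → ℕ) (C : (Fin m → ℤ) → ℝ)
    (s : Fin m → ℤ) : Set ((Σ i : Fin m, Fin (N i)) → ℝ) :=
  convexHull ℝ {v | ∃ D, inAbar D ∧ D ≠ 0 ∧ v = qDs N C s D}

/-- `A_s := H_s ∩ B_s`. -/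
noncomputable def AsSet {m : ℕ} (N : Fin m → ℕ) (C : (Fin m → ℤ) → ℝ)
    (s : Fin m → ℤ) : Set ((Σ i : Fin m, Fin (N i)) → ℝ) :=
  HsSet N s ∩ BsSet N C s

/-!
If zeroing a coordinate of a generator always yields a shrunken generator, then a coordinate
half-space `{p | 0 ≤ τ_j p_j}` can be moved inside `conv({0} ∪ G)`: replace each generator outside
the half-space by its projection to `{p_j = 0}`. A point `p` of the half-space lies between its own
projection and the point so obtained, because this replacement can only increase `τ_j p_j`. The
condition on `G` survives the restriction, so the coordinates of both orthants are treated one after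
the other.

Monotonicity of `C` gives the condition for the vectors `q_D`, the origin is the midpoint of `q_D`
and `q_{-D}`, and on `H_s` the cost `C_s(β(D̄))` is just `C(β(D))`, which no longer mentions `s`.
-/

/-- The points `p` with `0 ≤ τ_j p_j` for all `j ∈ S`: a coordinate half-space for a singleton `S`,
and `H_s` for `τ = τ_s` and `S` everything. -/
def orthantOn {ι : Type*} (τ : ι → ℝ) (S : Set ι) : Set (ι → ℝ) :=
  {p | ∀ j ∈ S, 0 ≤ τ j * p j}

/-- Zeroing any coordinate of a point of `G` yields `0` or a shrinking of a point of `G`. This is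
the form in which monotonicity of the cost enters the convex geometry of the vectors `q_D`. -/
def ZeroingStable {ι : Type*} [DecidableEq ι] (G : Set (ι → ℝ)) : Prop :=
  ∀ g ∈ G, ∀ j, Function.update g j 0 = 0 ∨
    ∃ g' ∈ G, ∃ r ∈ Set.Ioc (0 : ℝ) 1, Function.update g j 0 = r • g'

/-- The set `{q_D^{(s)} : D ∈ Ā \ {0}}`, whose convex hull is `B_s`. -/
def ballGenerators {m : ℕ} (N : Fin m → ℕ) (C : (Fin m → ℤ) → ℝ) (s : Fin m → ℤ) :
    Set ((Σ i : Fin m, Fin (N i)) → ℝ) :=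
  {v | ∃ D, inAbar D ∧ D ≠ 0 ∧ v = qDs N C s D}

/-- The set `{q_D^{(s)} : D ∈ Ā ∩ H_t ∩ H_s, D ≠ 0}` which, together with the origin, spans
`A_s ∩ H_t`. -/
def interfaceGenerators {m : ℕ} (N : Fin m → ℕ) (C : (Fin m → ℤ) → ℝ) (s t : Fin m → ℤ) :
    Set ((Σ i : Fin m, Fin (N i)) → ℝ) :=
  {v | ∃ D, inAbar D ∧ D ≠ 0 ∧ (fun j => (D j : ℝ)) ∈ HsSet N t ∧
    (fun j => (D j : ℝ)) ∈ HsSet N s ∧ v = qDs N C s D}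

theorem convexHull_insert_of_mem_convexHull {𝕜 E : Type*} [Semiring 𝕜] [PartialOrder 𝕜]
    [AddCommMonoid E] [Module 𝕜 E] {G : Set E} {x : E} (hx : x ∈ convexHull 𝕜 G) :
    convexHull 𝕜 (insert x G) = convexHull 𝕜 G :=
  (convexHull_min (Set.insert_subset hx (subset_convexHull 𝕜 G)) (convex_convexHull 𝕜 G)).antisymm
    (convexHull_mono (Set.subset_insert x G))

section ConvexHull

variable {𝕜 E : Type*} [Field 𝕜] [LinearOrder 𝕜] [IsStrictOrderedRing 𝕜] [AddCommGroup E]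
  [Module 𝕜 E]

theorem mem_of_mem_convexHull_of_nonneg {G K : Set E} (hK : Convex 𝕜 K) (f : E →ₗ[𝕜] 𝕜) (e : E)
    (hproj : ∀ g ∈ G, g - f g • e ∈ K) (hnonneg : ∀ g ∈ G, 0 ≤ f g → g ∈ K) {p : E}
    (hp : p ∈ convexHull 𝕜 G) (hfp : 0 ≤ f p) : p ∈ K := by
  have hp_proj : p - f p • e ∈ K :=
    convexHull_min hproj (hK.linear_preimage (LinearMap.id - f.smulRight e)) hp
  -- Replacing the generators with `f g < 0` by their projections moves `p` along `e` to height `t`.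
  have hp_raised : ∃ t, f p ≤ t ∧ p - f p • e + t • e ∈ K := by
    refine convexHull_min (t := {x | ∃ t, f x ≤ t ∧ x - f x • e + t • e ∈ K}) ?_ ?_ hp
    · intro g hg
      rcases le_total 0 (f g) with hfg | hfg
      · exact ⟨f g, le_rfl, by simpa using hnonneg g hg hfg⟩
      · exact ⟨0, hfg, by simpa using hproj g hg⟩
    · rintro x ⟨t, hxt, hx⟩ y ⟨u, hyu, hy⟩ a b ha hb hab
      refine ⟨a * t + b * u, ?_, ?_⟩
      · simp only [map_add, map_smul, smul_eq_mul]
        gcongr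
      · convert hK hx hy ha hb hab using 1
        simp only [map_add, map_smul, smul_eq_mul]
        module
  obtain ⟨t, hpt, ht⟩ := hp_raised
  have hmem : p - f p • e + (f p / t) • t • e ∈ K :=
    hK.add_smul_mem hp_proj ht
      ⟨div_nonneg hfp (hfp.trans hpt), div_le_one_of_le₀ hpt (hfp.trans hpt)⟩
  have hcancel : f p / t * t = f p :=
    div_mul_cancel_of_imp fun ht0 => le_antisymm (hpt.trans_eq ht0) hfp
  simpa [smul_smul, hcancel] using hmem

theorem zero_mem_convexHull_of_neg_mem {G : Set E} {x : E} (hx : x ∈ G) (hneg : -x ∈ G) :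
    (0 : E) ∈ convexHull 𝕜 G := by
  simpa using (convex_convexHull 𝕜 G).midpoint_mem (subset_convexHull 𝕜 G hx)
    (subset_convexHull 𝕜 G hneg)

end ConvexHull

section Orthant

variable {ι : Type*} {G : Set (ι → ℝ)} {τ : ι → ℝ} {S : Set ι}

theorem convex_orthantOn (τ : ι → ℝ) (S : Set ι) : Convex ℝ (orthantOn τ S) := by
  intro x hx y hy a b ha hb _ j hj
  calc (0 : ℝ) ≤ a * (τ j * x j) + b * (τ j * y j) :=
        add_nonneg (mul_nonneg ha (hx j hj)) (mul_nonneg hb (hy j hj))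
    _ = τ j * (a • x + b • y) j := by
        simp only [Pi.add_apply, Pi.smul_apply, smul_eq_mul]; ring

theorem zero_mem_orthantOn (τ : ι → ℝ) (S : Set ι) : 0 ∈ orthantOn τ S := fun j _ => by simp

theorem smul_mem_orthantOn_iff {r : ℝ} (hr : 0 < r) {p : ι → ℝ} :
    r • p ∈ orthantOn τ S ↔ p ∈ orthantOn τ S :=
  forall₂_congr fun j _ => by
    rw [Pi.smul_apply, smul_eq_mul, mul_left_comm, mul_nonneg_iff_of_pos_left hr]

theorem orthantOn_insert (τ : ι → ℝ) (S : Set ι) (j : ι) :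
    orthantOn τ (insert j S) = orthantOn τ S ∩ orthantOn τ {j} := by
  ext p
  simp [orthantOn, and_comm]

variable [DecidableEq ι]

theorem update_zero_mem_orthantOn {p : ι → ℝ} (hp : p ∈ orthantOn τ S) (j : ι) :
    Function.update p j 0 ∈ orthantOn τ S := by
  intro k hk
  rcases eq_or_ne k j with rfl | hkj
  · simp
  · simpa [hkj] using hp k hk

theorem ZeroingStable.exists_mem_inter_orthantOn (hG : ZeroingStable G) {g : ι → ℝ} (hg : g ∈ G)
    {j : ι} (hgj : Function.update g j 0 ∈ orthantOn τ S) :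
    Function.update g j 0 = 0 ∨
      ∃ g' ∈ G ∩ orthantOn τ S, ∃ r ∈ Set.Ioc (0 : ℝ) 1, Function.update g j 0 = r • g' := by
  refine (hG g hg j).imp_right ?_
  rintro ⟨g', hg', r, hr, heq⟩
  exact ⟨g', ⟨hg', (smul_mem_orthantOn_iff hr.1).1 (heq ▸ hgj)⟩, r, hr, heq⟩

theorem ZeroingStable.inter_orthantOn (hG : ZeroingStable G) (τ : ι → ℝ) (S : Set ι) :
    ZeroingStable (G ∩ orthantOn τ S) := fun _ hg j =>
  hG.exists_mem_inter_orthantOn hg.1 (update_zero_mem_orthantOn hg.2 j)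

theorem ZeroingStable.update_zero_mem_convexHull (hG : ZeroingStable G) {g : ι → ℝ} (hg : g ∈ G)
    (τ : ι → ℝ) (j : ι) :
    Function.update g j 0 ∈ convexHull ℝ (insert 0 (G ∩ orthantOn τ {j})) := by
  have hzero : (0 : ι → ℝ) ∈ convexHull ℝ (insert 0 (G ∩ orthantOn τ {j})) :=
    subset_convexHull ℝ _ (Set.mem_insert 0 _)
  have hgj : Function.update g j 0 ∈ orthantOn τ {j} := by simp [orthantOn]
  rcases hG.exists_mem_inter_orthantOn hg hgj with h0 | ⟨g', hg', r, hr, heq⟩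
  · rwa [h0]
  · rw [heq]
    exact (convex_convexHull ℝ _).smul_mem_of_zero_mem hzero
      (subset_convexHull ℝ _ (Set.mem_insert_of_mem 0 hg')) ⟨hr.1.le, hr.2⟩

theorem ZeroingStable.mem_convexHull_inter_halfspace (hG : ZeroingStable G) {j : ι} {p : ι → ℝ}
    (hp : p ∈ convexHull ℝ (insert 0 G)) (hpj : p ∈ orthantOn τ {j}) :
    p ∈ convexHull ℝ (insert 0 (G ∩ orthantOn τ {j})) := by
  have mem_halfspace (g : ι → ℝ) : g ∈ orthantOn τ {j} ↔ 0 ≤ τ j * g j := by simp [orthantOn]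
  rcases eq_or_ne (τ j) 0 with hτ | hτ
  · have huniv : orthantOn τ {j} = Set.univ := by
      ext g
      simp [mem_halfspace, hτ]
    rwa [huniv, Set.inter_univ]
  have hproj (g : ι → ℝ) : g - (τ j * g j) • Pi.single j (τ j)⁻¹ = Function.update g j 0 := by
    funext k
    rcases eq_or_ne k j with rfl | hkj
    · simp [mul_comm (τ k), hτ]
    · simp [hkj]
  refine mem_of_mem_convexHull_of_nonneg (convex_convexHull ℝ _) (τ j • LinearMap.proj j)
    (Pi.single j (τ j)⁻¹) ?_ ?_ hp ((mem_halfspace p).1 hpj)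
  · rintro g (rfl | hg)
    · simpa using subset_convexHull ℝ _ (Set.mem_insert 0 (G ∩ orthantOn τ {j}))
    · exact hproj g ▸ hG.update_zero_mem_convexHull hg τ j
  · rintro g (rfl | hg) hgj
    · exact subset_convexHull ℝ _ (Set.mem_insert 0 _)
    · exact subset_convexHull ℝ _ (Set.mem_insert_of_mem 0 ⟨hg, (mem_halfspace g).2 hgj⟩)

theorem ZeroingStable.convexHull_inter_orthantOn (hG : ZeroingStable G) (τ : ι → ℝ)
    (hS : S.Finite) :
    convexHull ℝ (insert 0 G) ∩ orthantOn τ S = convexHull ℝ (insert 0 (G ∩ orthantOn τ S)) := by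
  apply Set.Subset.antisymm
  · rintro p ⟨hp, hpS⟩
    induction S, hS using Set.Finite.induction_on with
    | empty => simpa [orthantOn] using hp
    | @insert j S _ _ ih =>
      rw [orthantOn_insert] at hpS ⊢
      rw [← Set.inter_assoc]
      exact (hG.inter_orthantOn τ S).mem_convexHull_inter_halfspace (ih hpS.1) hpS.2
  · refine Set.subset_inter (convexHull_mono (Set.insert_subset_insert Set.inter_subset_left)) ?_
    exact convexHull_min (Set.insert_subset (zero_mem_orthantOn τ S) Set.inter_subset_right)
      (convex_orthantOn τ S)

end Orthant

section Cost

variable {m : ℕ} {N : Fin m → ℕ} {C : (Fin m → ℤ) → ℝ} {s : Fin m → ℤ}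
  {D : (Σ i : Fin m, Fin (N i)) → ℤ}

theorem blockAbsSum_nonneg (D : (Σ i : Fin m, Fin (N i)) → ℤ) (i : Fin m) :
    0 ≤ blockAbsSum N D i :=
  Finset.sum_nonneg fun _ _ => abs_nonneg _

theorem blockAbsSum_ne_zero (hD : D ≠ 0) : blockAbsSum N D ≠ 0 := by
  obtain ⟨⟨i, k⟩, hk⟩ := Function.ne_iff.1 hD
  refine Function.ne_iff.2 ⟨i, (Finset.sum_pos' (fun _ _ => abs_nonneg _) ?_).ne'⟩
  exact ⟨k, Finset.mem_univ k, abs_pos.2 hk⟩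

theorem SignVec.ne_zero (hs : SignVec s) (i : Fin m) : s i ≠ 0 := by
  rcases hs i with h | h <;> simp [h]

theorem SignVec.mul_abs_eq (hs : SignVec s) {i : Fin m} {x : ℤ} (hx : 0 ≤ s i * x) :
    s i * |x| = x := by
  rcases hs i with h | h <;> rw [h] at hx ⊢
  · rw [one_mul, abs_of_nonneg (by simpa using hx)]
  · rw [abs_of_nonpos (by simpa using hx), neg_one_mul, neg_neg]

theorem Csgn_pos (hpos : ∀ x, x ≠ 0 → 0 < C x) (hs : SignVec s) {x : Fin m → ℤ} (hx : x ≠ 0) :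
    0 < Csgn C s x := by
  obtain ⟨i, hi⟩ := Function.ne_iff.1 hx
  exact hpos _ (Function.ne_iff.2 ⟨i, mul_ne_zero (hs.ne_zero i) (abs_ne_zero.2 hi)⟩)

theorem Csgn_mono (hmono : ∀ x y, PreOrdInt x y → C x ≤ C y) (s : Fin m → ℤ) {x y : Fin m → ℤ}
    (hxy : ∀ i, |x i| ≤ |y i|) : Csgn C s x ≤ Csgn C s y := by
  refine hmono _ _ fun i => ⟨?_, ?_⟩
  · simpa only [abs_mul, abs_abs] using mul_le_mul_of_nonneg_left (hxy i) (abs_nonneg (s i))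
  · rw [mul_mul_mul_comm]
    exact mul_nonneg (mul_self_nonneg _) (mul_nonneg (abs_nonneg _) (abs_nonneg _))

theorem blockAbsSum_update_zero_le (D : (Σ i : Fin m, Fin (N i)) → ℤ) (j : Σ i : Fin m, Fin (N i))
    (i : Fin m) : blockAbsSum N (Function.update D j 0) i ≤ blockAbsSum N D i := by
  refine Finset.sum_le_sum fun k _ => ?_
  rcases eq_or_ne ⟨i, k⟩ j with rfl | hkj
  · simp
  · simp [hkj]

theorem Csgn_blockAbsSum_eq (C : (Fin m → ℤ) → ℝ) (hs : SignVec s)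
    (hD : (fun j => (D j : ℝ)) ∈ HsSet N s) :
    Csgn C s (blockAbsSum N D) = C fun i => ∑ k, D ⟨i, k⟩ := by
  refine congrArg C (funext fun i => ?_)
  have hterm (k : Fin (N i)) : 0 ≤ (s i : ℝ) * D ⟨i, k⟩ := hD ⟨i, k⟩
  calc s i * |blockAbsSum N D i| = ∑ k, s i * |D ⟨i, k⟩| := by
        rw [abs_of_nonneg (blockAbsSum_nonneg D i), blockAbsSum, Finset.mul_sum]
    _ = ∑ k, D ⟨i, k⟩ :=
        Finset.sum_congr rfl fun k _ => hs.mul_abs_eq (by exact_mod_cast hterm k)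

end Cost

section Generators

variable {m : ℕ} {N : Fin m → ℕ} {C : (Fin m → ℤ) → ℝ} {s s' : Fin m → ℤ}
  {D : (Σ i : Fin m, Fin (N i)) → ℤ}

theorem qDs_eq_smul (N : Fin m → ℕ) (C : (Fin m → ℤ) → ℝ) (s : Fin m → ℤ)
    (D : (Σ i : Fin m, Fin (N i)) → ℤ) :
    qDs N C s D = (Csgn C s (blockAbsSum N D))⁻¹ • fun j => (D j : ℝ) :=
  funext fun _ => div_eq_inv_mul _ _

theorem qDs_neg (N : Fin m → ℕ) (C : (Fin m → ℤ) → ℝ) (s : Fin m → ℤ)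
    (D : (Σ i : Fin m, Fin (N i)) → ℤ) : qDs N C s (-D) = -qDs N C s D := by
  have hblock : blockAbsSum N (-D) = blockAbsSum N D :=
    funext fun i => Finset.sum_congr rfl fun k _ => abs_neg (D ⟨i, k⟩)
  funext j
  simp [qDs, hblock, neg_div]

theorem qDs_eq_of_mem_HsSet (C : (Fin m → ℤ) → ℝ) (hs : SignVec s) (hs' : SignVec s')
    (hDs : (fun j => (D j : ℝ)) ∈ HsSet N s) (hDs' : (fun j => (D j : ℝ)) ∈ HsSet N s') :
    qDs N C s D = qDs N C s' D := by
  rw [qDs_eq_smul, qDs_eq_smul, Csgn_blockAbsSum_eq C hs hDs, Csgn_blockAbsSum_eq C hs' hDs']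

theorem HsSet_eq_orthantOn_univ (N : Fin m → ℕ) (s : Fin m → ℤ) :
    HsSet N s = orthantOn (tauS N s) Set.univ := by
  simp [HsSet, orthantOn]

theorem qDs_mem_HsSet_iff (hpos : ∀ x, x ≠ 0 → 0 < C x) (hs : SignVec s) (hD : D ≠ 0)
    (t : Fin m → ℤ) : qDs N C s D ∈ HsSet N t ↔ (fun j => (D j : ℝ)) ∈ HsSet N t := by
  rw [qDs_eq_smul, HsSet_eq_orthantOn_univ,
    smul_mem_orthantOn_iff (inv_pos.2 (Csgn_pos hpos hs (blockAbsSum_ne_zero hD)))]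

theorem inAbar.update_zero (hD : inAbar D) (j : Σ i : Fin m, Fin (N i)) :
    inAbar (Function.update D j 0) := by
  intro k
  rcases eq_or_ne k j with rfl | hkj
  · simp
  · simpa [hkj] using hD k

theorem zeroingStable_ballGenerators (hpos : ∀ x, x ≠ 0 → 0 < C x)
    (hmono : ∀ x y, PreOrdInt x y → C x ≤ C y) (hs : SignVec s) :
    ZeroingStable (ballGenerators N C s) := by
  rintro _ ⟨D, hD, hD0, rfl⟩ j
  have hcost : 0 < Csgn C s (blockAbsSum N D) := Csgn_pos hpos hs (blockAbsSum_ne_zero hD0)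
  have hupdate : Function.update (qDs N C s D) j 0 =
      (Csgn C s (blockAbsSum N D))⁻¹ • fun k => (Function.update D j 0 k : ℝ) := by
    funext k
    rcases eq_or_ne k j with rfl | hkj
    · simp
    · simp [qDs_eq_smul, hkj]
  refine or_iff_not_imp_left.2 fun hne => ?_
  have hD'0 : Function.update D j 0 ≠ 0 := fun h0 => hne (by rw [hupdate, h0]; ext; simp)
  have hcost' : 0 < Csgn C s (blockAbsSum N (Function.update D j 0)) :=
    Csgn_pos hpos hs (blockAbsSum_ne_zero hD'0)
  have hle : Csgn C s (blockAbsSum N (Function.update D j 0)) ≤ Csgn C s (blockAbsSum N D) :=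
    Csgn_mono hmono s fun i =>
      abs_le_abs_of_nonneg (blockAbsSum_nonneg _ i) (blockAbsSum_update_zero_le D j i)
  refine ⟨_, ⟨_, hD.update_zero j, hD'0, rfl⟩, _,
    ⟨div_pos hcost' hcost, div_le_one_of_le₀ hle hcost.le⟩, ?_⟩
  rw [hupdate, qDs_eq_smul, smul_smul, div_mul_eq_mul_div, mul_inv_cancel₀ hcost'.ne', one_div]

theorem zero_mem_BsSet [Nonempty (Σ i : Fin m, Fin (N i))] (C : (Fin m → ℤ) → ℝ)
    (s : Fin m → ℤ) : 0 ∈ BsSet N C s := by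
  refine zero_mem_convexHull_of_neg_mem (x := qDs N C s 1) ⟨1, ?_, one_ne_zero, rfl⟩
    ⟨-1, ?_, neg_ne_zero.2 one_ne_zero, (qDs_neg N C s 1).symm⟩ <;> simp [inAbar]

theorem BsSet_inter_HsSet_inter_HsSet [Nonempty (Σ i : Fin m, Fin (N i))]
    (hpos : ∀ x, x ≠ 0 → 0 < C x) (hmono : ∀ x y, PreOrdInt x y → C x ≤ C y) (hs : SignVec s)
    (t t' : Fin m → ℤ) :
    BsSet N C s ∩ HsSet N t ∩ HsSet N t' =
      convexHull ℝ (insert 0 (ballGenerators N C s ∩ HsSet N t ∩ HsSet N t')) := by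
  have hstable := zeroingStable_ballGenerators (N := N) hpos hmono hs
  have hB : BsSet N C s = convexHull ℝ (insert 0 (ballGenerators N C s)) :=
    (convexHull_insert_of_mem_convexHull (zero_mem_BsSet C s)).symm
  simp only [HsSet_eq_orthantOn_univ]
  rw [hB, hstable.convexHull_inter_orthantOn _ Set.finite_univ,
    (hstable.inter_orthantOn _ _).convexHull_inter_orthantOn _ Set.finite_univ]

theorem ballGenerators_inter_HsSet_inter_HsSet (hpos : ∀ x, x ≠ 0 → 0 < C x) (hs : SignVec s)
    (t : Fin m → ℤ) :
    ballGenerators N C s ∩ HsSet N t ∩ HsSet N s = interfaceGenerators N C s t := by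
  ext v
  constructor
  · rintro ⟨⟨⟨D, hD, hD0, rfl⟩, ht⟩, hDs⟩
    exact ⟨D, hD, hD0, (qDs_mem_HsSet_iff hpos hs hD0 t).1 ht,
      (qDs_mem_HsSet_iff hpos hs hD0 s).1 hDs, rfl⟩
  · rintro ⟨D, hD, hD0, ht, hDs, rfl⟩
    exact ⟨⟨⟨D, hD, hD0, rfl⟩, (qDs_mem_HsSet_iff hpos hs hD0 t).2 ht⟩,
      (qDs_mem_HsSet_iff hpos hs hD0 s).2 hDs⟩

theorem AsSet_inter_HsSet [Nonempty (Σ i : Fin m, Fin (N i))] (hpos : ∀ x, x ≠ 0 → 0 < C x)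
    (hmono : ∀ x y, PreOrdInt x y → C x ≤ C y) (hs : SignVec s) (t : Fin m → ℤ) :
    AsSet N C s ∩ HsSet N t = convexHull ℝ ({0} ∪ interfaceGenerators N C s t) := by
  rw [AsSet, Set.inter_comm (HsSet N s), Set.inter_right_comm,
    BsSet_inter_HsSet_inter_HsSet hpos hmono hs, ballGenerators_inter_HsSet_inter_HsSet hpos hs,
    Set.singleton_union]

theorem interfaceGenerators_comm (C : (Fin m → ℤ) → ℝ) (hs : SignVec s) (hs' : SignVec s') :
    interfaceGenerators N C s s' = interfaceGenerators N C s' s := by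
  refine Set.ext fun v => exists_congr fun D => ?_
  constructor
  · rintro ⟨hD, hD0, hDs', hDs, rfl⟩
    exact ⟨hD, hD0, hDs, hDs', qDs_eq_of_mem_HsSet C hs hs' hDs hDs'⟩
  · rintro ⟨hD, hD0, hDs, hDs', rfl⟩
    exact ⟨hD, hD0, hDs', hDs, qDs_eq_of_mem_HsSet C hs' hs hDs' hDs⟩

end Generators

theorem interfaces_of_orthant_balls_general {m : ℕ} (C : (Fin m → ℤ) → ℝ)
    (hpos : ∀ x, x ≠ 0 → 0 < C x) (hmono : ∀ x y, PreOrdInt x y → C x ≤ C y)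
    (N : Fin m → ℕ) [Nonempty (Σ i : Fin m, Fin (N i))] {s s' : Fin m → ℤ}
    (hs : SignVec s) (hs' : SignVec s') :
    (AsSet N C s' ∩ HsSet N s =
      convexHull ℝ ({0} ∪ {v | ∃ D, inAbar D ∧ D ≠ 0 ∧
        (fun j => (D j : ℝ)) ∈ HsSet N s ∧ (fun j => (D j : ℝ)) ∈ HsSet N s' ∧
        v = qDs N C s' D})) ∧
    (∀ D : (Σ i : Fin m, Fin (N i)) → ℤ, inAbar D → D ≠ 0 →
      (fun j => (D j : ℝ)) ∈ HsSet N s → (fun j => (D j : ℝ)) ∈ HsSet N s' →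
      qDs N C s D = qDs N C s' D) ∧
    AsSet N C s' ∩ HsSet N s = AsSet N C s ∩ HsSet N s' := by
  refine ⟨AsSet_inter_HsSet hpos hmono hs' s, fun D _ _ => qDs_eq_of_mem_HsSet C hs hs', ?_⟩
  rw [AsSet_inter_HsSet hpos hmono hs' s, AsSet_inter_HsSet hpos hmono hs s',
    interfaceGenerators_comm C hs hs']

/-- Let `C : ℤ^m → [0,∞)` satisfy (i), (ii), (iii'). Then for all
sign vectors `s, s' ∈ {-1,1}^m` one has
`A_{s'} ∩ H_s = conv({0} ∪ {q_D^{(s')} : D ∈ Ā ∩ H_s ∩ H_{s'}, D ≠ 0})`; moreover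
`q_D^{(s)} = q_D^{(s')}` for every such `D`, and in particular
`A_{s'} ∩ H_s = A_s ∩ H_{s'}`. -/
theorem interfaces_of_orthant_balls {m : ℕ} (hm : 1 ≤ m)
    (C : (Fin m → ℤ) → ℝ)
    (hC0 : ∀ x, 0 ≤ C x)
    (heven : ∀ x, C (-x) = C x)
    (hzero : ∀ x, C x = 0 ↔ x = 0)
    (hmono : ∀ x y, PreOrdInt x y → C x ≤ C y)
    (hsublin : ∃ nrmStar : (Fin m → ℝ) → ℝ, IsNorm nrmStar ∧
      (∀ x y : Fin m → ℝ, PreOrd x y → nrmStar x ≤ nrmStar y) ∧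
      ∀ x x' : Fin m → ℤ, x ≠ 0 → x' ≠ 0 → PreOrdInt x' x →
        C x / nrmStar (fun i => (x i : ℝ)) ≤ C x' / nrmStar (fun i => (x' i : ℝ)))
    (N : Fin m → ℕ) (hN : ∀ i, 0 < N i) :
    ∀ s s' : Fin m → ℤ, SignVec s → SignVec s' →
      (AsSet N C s' ∩ HsSet N s =
        convexHull ℝ ({0} ∪ {v | ∃ D, inAbar D ∧ D ≠ 0 ∧
          (fun j => (D j : ℝ)) ∈ HsSet N s ∧ (fun j => (D j : ℝ)) ∈ HsSet N s' ∧
          v = qDs N C s' D})) ∧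
      (∀ D : (Σ i : Fin m, Fin (N i)) → ℤ, inAbar D → D ≠ 0 →
        (fun j => (D j : ℝ)) ∈ HsSet N s → (fun j => (D j : ℝ)) ∈ HsSet N s' →
        qDs N C s D = qDs N C s' D) ∧
      AsSet N C s' ∩ HsSet N s = AsSet N C s ∩ HsSet N s' := by
  have : Nonempty (Σ i : Fin m, Fin (N i)) := ⟨⟨⟨0, hm⟩, ⟨0, hN _⟩⟩⟩
  exact fun s s' hs hs' => interfaces_of_orthant_balls_general C
    (fun x hx => (hC0 x).lt_of_ne' fun h => hx ((hzero x).1 h)) hmono N hs hs'
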